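/- arXiv:2505.15416 — 7 statements merged into one kernel-verified Lean document; each statement's English description precedes it below -/
import Mathlib

section
/- The complement of the Shrikhande graph contains no four pairwise nonadjacent vertices (it is 4K1-free), and for every natural number ℓ ≥ 6 it contains no induced cycle on ℓ vertices (it is C_ℓ-free); that is, there is no injective map f from Fin ℓ to its vertex set such that f(i) and f(j) are adjacent if and only if i and j are consecutive modulo ℓ. -/
/-!
Both graphs are Cayley graphs on `(ZMod 4)²`, so adjacency of `u` and `v` depends only on `u - v`,
and any configuration may be translated so that one of its vertices is the origin.

* Four pairwise nonadjacent vertices of the complement form a `K₄` in the Shrikhande graph. There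
  is none, because the neighbourhood of a vertex is a triangle-free hexagon (`no_K4`).
* An induced cycle of length `ℓ ≥ 8` contains the four pairwise nonconsecutive positions
  `0, 2, 4, 6`, so it would give such a `K₄`.
* An induced `C₆` or `C₇` in the complement is an induced copy of the complementary cycle in the
  Shrikhande graph. With one vertex at the origin, a small finite search excludes both
  (`no_co_C6`, `no_co_C7`).
-/

/-- The Shrikhande graph on `(ZMod 4) × (ZMod 4)`: distinct vertices `(a,b)` and `(c,d)` are
adjacent iff `(a-c, b-d) ∈ {(0,1),(0,3),(1,0),(3,0),(1,1),(3,3)}` (arithmetic mod 4; this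
difference set is closed under negation, so the symmetrization `fromRel` does not change it). -/
def shrikhande : SimpleGraph (ZMod 4 × ZMod 4) :=
  SimpleGraph.fromRel (fun u v =>
    (u.1 - v.1, u.2 - v.2) ∈
      ({(0, 1), (0, 3), (1, 0), (3, 0), (1, 1), (3, 3)} : Finset (ZMod 4 × ZMod 4)))

/-- The connection set of the Shrikhande graph as a Cayley graph on `(ZMod 4)²`. -/
def shrikhandeDiff : Finset (ZMod 4 × ZMod 4) :=
  {(0, 1), (0, 3), (1, 0), (3, 0), (1, 1), (3, 3)}

lemma neg_mem_shrikhandeDiff : ∀ x ∈ shrikhandeDiff, -x ∈ shrikhandeDiff := by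
  decide

lemma shrikhande_adj_iff (u v : ZMod 4 × ZMod 4) :
    shrikhande.Adj u v ↔ u - v ∈ shrikhandeDiff := by
  have hne : u - v ∈ shrikhandeDiff → u ≠ v := by
    rintro h rfl
    rw [sub_self] at h
    exact absurd h (by decide)
  have hsymm : v - u ∈ shrikhandeDiff → u - v ∈ shrikhandeDiff := fun h => by
    simpa using neg_mem_shrikhandeDiff _ h
  change (u ≠ v ∧ (u - v ∈ shrikhandeDiff ∨ v - u ∈ shrikhandeDiff)) ↔ _
  tauto

/-- The neighbourhood of the origin contains no triangle. -/
lemma no_K4 : ∀ x ∈ shrikhandeDiff, ∀ y ∈ shrikhandeDiff, x - y ∈ shrikhandeDiff →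
    ∀ z ∈ shrikhandeDiff, x - z ∈ shrikhandeDiff → ¬ y - z ∈ shrikhandeDiff := by
  decide

set_option synthInstance.maxHeartbeats 400000 in
set_option synthInstance.maxSize 2000 in
/-- No induced complement of `C₆` (a triangular prism) has its vertex `0` at the origin; `xᵢ` is
the position of the vertex `i`. -/
lemma no_co_C6 : ∀ x₂ ∈ shrikhandeDiff, ∀ x₄ ∈ shrikhandeDiff, x₂ - x₄ ∈ shrikhandeDiff →
    ∀ x₃ ∈ shrikhandeDiff, x₂ - x₃ ∉ shrikhandeDiff → x₃ - x₄ ∉ shrikhandeDiff →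
    ∀ x₁ ∉ shrikhandeDiff, x₁ - x₂ ∉ shrikhandeDiff → x₁ - x₃ ∈ shrikhandeDiff →
      x₁ - x₄ ∈ shrikhandeDiff →
    ∀ x₅ ∉ shrikhandeDiff, x₁ - x₅ ∈ shrikhandeDiff → x₂ - x₅ ∈ shrikhandeDiff →
      x₃ - x₅ ∈ shrikhandeDiff → ¬ x₄ - x₅ ∉ shrikhandeDiff := by
  decide +kernel

set_option synthInstance.maxHeartbeats 400000 in
set_option synthInstance.maxSize 2000 in
/-- No induced complement of `C₇` has its vertex `0` at the origin; `xᵢ` is the position of the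
vertex `i`. -/
lemma no_co_C7 : ∀ x₂ ∈ shrikhandeDiff, ∀ x₄ ∈ shrikhandeDiff, x₂ - x₄ ∈ shrikhandeDiff →
    ∀ x₃ ∈ shrikhandeDiff, x₂ - x₃ ∉ shrikhandeDiff → x₃ - x₄ ∉ shrikhandeDiff →
    ∀ x₅ ∈ shrikhandeDiff, x₂ - x₅ ∈ shrikhandeDiff → x₃ - x₅ ∈ shrikhandeDiff →
      x₄ - x₅ ∉ shrikhandeDiff →
    ∀ x₁ ∉ shrikhandeDiff, x₁ - x₂ ∉ shrikhandeDiff → x₁ - x₃ ∈ shrikhandeDiff →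
      x₁ - x₄ ∈ shrikhandeDiff → x₁ - x₅ ∈ shrikhandeDiff →
    ∀ x₆ ∉ shrikhandeDiff, x₁ - x₆ ∈ shrikhandeDiff → x₂ - x₆ ∈ shrikhandeDiff →
      x₃ - x₆ ∈ shrikhandeDiff → x₄ - x₆ ∈ shrikhandeDiff → ¬ x₅ - x₆ ∉ shrikhandeDiff := by
  decide +kernel

lemma shrikhande_K4_free (a b c d : ZMod 4 × ZMod 4) (hab : shrikhande.Adj a b)
    (hac : shrikhande.Adj a c) (had : shrikhande.Adj a d) (hbc : shrikhande.Adj b c)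
    (hbd : shrikhande.Adj b d) (hcd : shrikhande.Adj c d) : False := by
  rw [shrikhande.adj_comm, shrikhande_adj_iff] at hab hac had
  rw [shrikhande_adj_iff] at hbc hbd hcd
  exact no_K4 (b - a) hab (c - a) hac (by simpa using hbc) (d - a) had (by simpa using hbd)
    (by simpa using hcd)

/-- The complement of the Shrikhande graph is `4K₁`-free and, for every `ℓ ≥ 6`, has no
induced cycle on `ℓ` vertices. -/
theorem complement_shrikhande_4K1_free_and_Cl_free :
    (¬ ∃ a b c d : ZMod 4 × ZMod 4,
        a ≠ b ∧ a ≠ c ∧ a ≠ d ∧ b ≠ c ∧ b ≠ d ∧ c ≠ d ∧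
        ¬ shrikhandeᶜ.Adj a b ∧ ¬ shrikhandeᶜ.Adj a c ∧ ¬ shrikhandeᶜ.Adj a d ∧
        ¬ shrikhandeᶜ.Adj b c ∧ ¬ shrikhandeᶜ.Adj b d ∧ ¬ shrikhandeᶜ.Adj c d) ∧
    (∀ ℓ : ℕ, 6 ≤ ℓ →
      ¬ ∃ f : Fin ℓ → ZMod 4 × ZMod 4, Function.Injective f ∧
        ∀ i j : Fin ℓ, shrikhandeᶜ.Adj (f i) (f j) ↔
          ((i.val + 1) % ℓ = j.val ∨ (j.val + 1) % ℓ = i.val)) := by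
  refine ⟨?_, ?_⟩
  · rintro ⟨a, b, c, d, hab, hac, had, hbc, hbd, hcd, h₁, h₂, h₃, h₄, h₅, h₆⟩
    simp only [SimpleGraph.compl_adj, not_and, not_not] at h₁ h₂ h₃ h₄ h₅ h₆
    exact shrikhande_K4_free a b c d (h₁ hab) (h₂ hac) (h₃ had) (h₄ hbc) (h₅ hbd) (h₆ hcd)
  · rintro ℓ hℓ ⟨f, hf, hadj⟩
    have far : ∀ i j : Fin ℓ, i ≠ j → (i.val + 1) % ℓ ≠ j.val → (j.val + 1) % ℓ ≠ i.val →
        shrikhande.Adj (f i) (f j) := by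
      intro i j hij h₁ h₂
      have h := hadj i j
      rw [SimpleGraph.compl_adj] at h
      have hne : f i ≠ f j := hf.ne hij
      tauto
    have near : ∀ i j : Fin ℓ, (i.val + 1) % ℓ = j.val ∨ (j.val + 1) % ℓ = i.val →
        ¬ shrikhande.Adj (f i) (f j) := by
      intro i j hij
      have h := (hadj i j).2 hij
      rw [SimpleGraph.compl_adj] at h
      exact h.2
    simp only [shrikhande_adj_iff] at near
    obtain rfl | rfl | h8 : ℓ = 6 ∨ ℓ = 7 ∨ 8 ≤ ℓ := by omega
    · simp only [shrikhande_adj_iff] at far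
      apply no_co_C6 (f 2 - f 0) _ (f 4 - f 0) _ _ (f 3 - f 0) _ _ _ (f 1 - f 0) _ _ _ _
        (f 5 - f 0)
      all_goals try rw [sub_sub_sub_cancel_right]
      all_goals first
        | exact far _ _ (by decide) (by decide) (by decide)
        | exact near _ _ (by decide)
    · simp only [shrikhande_adj_iff] at far
      apply no_co_C7 (f 2 - f 0) _ (f 4 - f 0) _ _ (f 3 - f 0) _ _ _ (f 5 - f 0) _ _ _ _
        (f 1 - f 0) _ _ _ _ _ (f 6 - f 0)
      all_goals try rw [sub_sub_sub_cancel_right]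
      all_goals first
        | exact far _ _ (by decide) (by decide) (by decide)
        | exact near _ _ (by decide)
    · have step : ∀ m n : ℕ, ∀ (hn : n < 7) (hmn : m + 2 ≤ n),
          shrikhande.Adj (f ⟨m, by omega⟩) (f ⟨n, by omega⟩) := by
        intro m n hn hmn
        apply far
        · simp only [ne_eq, Fin.mk.injEq]
          omega
        · rw [Nat.mod_eq_of_lt (by simp only; omega)]
          simp only
          omega
        · rw [Nat.mod_eq_of_lt (by simp only; omega)]
          simp only
          omega
      exact shrikhande_K4_free _ _ _ _ (step 0 2 (by omega) (by omega))
        (step 0 4 (by omega) (by omega)) (step 0 6 (by omega) (by omega))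
        (step 2 4 (by omega) (by omega)) (step 2 6 (by omega) (by omega))
        (step 4 6 (by omega) (by omega))
end

section
/- The Shrikhande graph contains no induced subgraph isomorphic to the complement of the path on 6 vertices; that is, there is no injective map f from Fin 6 to its vertex set such that f(i) and f(j) are adjacent if and only if i ≠ j and |i − j| ≥ 2. -/
/-- The connection set of the Shrikhande graph as a Cayley graph. -/
def connectionSet : Finset (ZMod 4 × ZMod 4) :=
  {(0, 1), (0, 3), (1, 0), (3, 0), (1, 1), (3, 3)}

lemma sub_mem_connectionSet {u v : ZMod 4 × ZMod 4} (h : shrikhande.Adj u v) :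
    u - v ∈ connectionSet := by
  have neg_mem : ∀ d ∈ connectionSet, -d ∈ connectionSet := by decide
  rcases h.2 with h | h
  · exact h
  · have := neg_mem (v - u) h
    rwa [neg_sub] at this

/-- A nonzero `d` is a difference of two elements of the connection set in at most two ways;
equivalently, two vertices differing by `d` have at most two common neighbours. -/
lemma card_common_le_two :
    ∀ d : ZMod 4 × ZMod 4, d ≠ 0 →
      (connectionSet.filter (fun x => x + d ∈ connectionSet)).card ≤ 2 := by
  decide

/-- The Shrikhande graph has no induced subgraph isomorphic to the complement of the path on
six vertices. -/
theorem shrikhande_no_induced_complement_P6 :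
    ¬ ∃ f : Fin 6 → ZMod 4 × ZMod 4, Function.Injective f ∧
      ∀ i j : Fin 6, shrikhande.Adj (f i) (f j) ↔
        (i ≠ j ∧ 2 ≤ |(i.val : ℤ) - (j.val : ℤ)|) := by
  rintro ⟨f, hf, hadj⟩
  have hd : f 0 - f 1 ≠ 0 := sub_ne_zero.mpr (hf.ne (by decide))
  -- The common neighbours `f 3`, `f 4`, `f 5` of `f 0` and `f 1`, translated by `-f 0`.
  have hsub : ({3, 4, 5} : Finset (Fin 6)).image (fun k => f k - f 0) ⊆
      connectionSet.filter (fun x => x + (f 0 - f 1) ∈ connectionSet) := by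
    intro x hx
    obtain ⟨k, hk, rfl⟩ := Finset.mem_image.mp hx
    have far : ∀ k ∈ ({3, 4, 5} : Finset (Fin 6)),
        (k ≠ 0 ∧ 2 ≤ |(k.val : ℤ) - ((0 : Fin 6).val : ℤ)|) ∧
        (k ≠ 1 ∧ 2 ≤ |(k.val : ℤ) - ((1 : Fin 6).val : ℤ)|) := by decide
    refine Finset.mem_filter.mpr ⟨sub_mem_connectionSet ((hadj k 0).mpr (far k hk).1), ?_⟩
    rw [sub_add_sub_cancel]
    exact sub_mem_connectionSet ((hadj k 1).mpr (far k hk).2)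
  have hinj : Function.Injective (fun k => f k - f 0) := fun a b hab =>
    hf (sub_left_injective hab)
  have hle := (Finset.card_le_card hsub).trans (card_common_le_two _ hd)
  rw [Finset.card_image_of_injective _ hinj] at hle
  exact absurd hle (by decide)
end

section
/- In the complement of the Shrikhande graph, for any three vertices u, v, r with r ≠ u and r ≠ v, there exists a vertex w belonging to the closed neighborhood of r (so w = r or w is adjacent to r) such that w is not in the closed neighborhood of u and not in the closed neighborhood of v. (This is the combinatorial core of the robber's strategy showing that two cops cannot win on this graph.) -/
instance : DecidableRel shrikhande.Adj := fun u v => by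
  unfold shrikhande
  infer_instance

theorem shrikhande_degree (u : ZMod 4 × ZMod 4) :
    (Finset.univ.filter fun w => shrikhande.Adj u w).card = 6 := by
  revert u
  decide +kernel

theorem shrikhande_card_common (u v : ZMod 4 × ZMod 4) (h : u ≠ v) :
    (Finset.univ.filter fun w => shrikhande.Adj u w ∧ shrikhande.Adj v w).card = 2 := by
  revert u v
  decide +kernel

/-- The escape property in terms of the Shrikhande graph itself rather than its complement. -/
theorem exists_common_not_adj (u v r : ZMod 4 × ZMod 4) (hru : r ≠ u) (hrv : r ≠ v) :
    ∃ w, shrikhande.Adj u w ∧ shrikhande.Adj v w ∧ ¬ shrikhande.Adj r w := by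
  by_contra! hall
  by_cases huv : u = v
  · subst huv
    have hsub : (Finset.univ.filter fun w => shrikhande.Adj u w) ⊆
        Finset.univ.filter fun w => shrikhande.Adj r w ∧ shrikhande.Adj u w := by
      intro w hw
      simp only [Finset.mem_filter, Finset.mem_univ, true_and] at hw ⊢
      exact ⟨hall w hw hw, hw⟩
    have hle := Finset.card_le_card hsub
    rw [shrikhande_degree, shrikhande_card_common r u hru] at hle
    omega
  · obtain ⟨a, b, hab, hset⟩ := Finset.card_eq_two.mp (shrikhande_card_common u v huv)
    have ha : shrikhande.Adj u a ∧ shrikhande.Adj v a := by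
      have : a ∈ ({a, b} : Finset (ZMod 4 × ZMod 4)) := by simp
      simpa [← hset] using this
    have hb : shrikhande.Adj u b ∧ shrikhande.Adj v b := by
      have : b ∈ ({a, b} : Finset (ZMod 4 × ZMod 4)) := by simp
      simpa [← hset] using this
    have hra := hall a ha.1 ha.2
    have hrb := hall b hb.1 hb.2
    have hsub : ({u, v, r} : Finset (ZMod 4 × ZMod 4)) ⊆
        Finset.univ.filter fun w => shrikhande.Adj a w ∧ shrikhande.Adj b w := by
      intro w hw
      simp only [Finset.mem_insert, Finset.mem_singleton] at hw
      simp only [Finset.mem_filter, Finset.mem_univ, true_and]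
      rcases hw with rfl | rfl | rfl
      · exact ⟨ha.1.symm, hb.1.symm⟩
      · exact ⟨ha.2.symm, hb.2.symm⟩
      · exact ⟨hra.symm, hrb.symm⟩
    have hle := Finset.card_le_card hsub
    rw [shrikhande_card_common a b hab,
      Finset.card_eq_three.mpr ⟨u, v, r, huv, hru.symm, hrv.symm, rfl⟩] at hle
    omega

/-- In the complement of the Shrikhande graph, for any two cop positions `u, v` and any robber
position `r` distinct from both, some vertex of the closed neighborhood of `r` lies outside
the closed neighborhoods of both `u` and `v`. -/
theorem complement_shrikhande_robber_escape (u v r : ZMod 4 × ZMod 4)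
    (hru : r ≠ u) (hrv : r ≠ v) :
    ∃ w : ZMod 4 × ZMod 4, (w = r ∨ shrikhandeᶜ.Adj r w) ∧
      ¬ (w = u ∨ shrikhandeᶜ.Adj u w) ∧ ¬ (w = v ∨ shrikhandeᶜ.Adj v w) := by
  obtain ⟨w, huw, hvw, hrw⟩ := exists_common_not_adj u v r hru hrv
  refine ⟨w, ?_, ?_, ?_⟩
  · by_cases h : w = r
    · exact Or.inl h
    · exact Or.inr ((SimpleGraph.compl_adj _ _ _).mpr ⟨Ne.symm h, hrw⟩)
  · rintro (rfl | h)
    · exact huw.ne rfl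
    · exact ((SimpleGraph.compl_adj _ _ _).mp h).2 huw
  · rintro (rfl | h)
    · exact hvw.ne rfl
    · exact ((SimpleGraph.compl_adj _ _ _).mp h).2 hvw
end

section
/- The domination number of the complement of the Shrikhande graph equals 3: there exist three vertices S = {s1, s2, s3} such that every vertex not in S is adjacent (in the complement of the Shrikhande graph) to some vertex of S, but for any two vertices u, v there exists a vertex w with w ∉ {u, v} that is adjacent to neither u nor v. -/
lemma neg_mem_connectionSet : ∀ d ∈ connectionSet, -d ∈ connectionSet := by
  decide

lemma compl_shrikhande_adj (x y : ZMod 4 × ZMod 4) :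
    shrikhandeᶜ.Adj x y ↔ x ≠ y ∧ x - y ∉ connectionSet := by
  have hadj : shrikhande.Adj x y ↔
      x ≠ y ∧ (x - y ∈ connectionSet ∨ y - x ∈ connectionSet) := Iff.rfl
  have hsymm : y - x ∈ connectionSet → x - y ∈ connectionSet := fun h => by
    simpa using neg_mem_connectionSet _ h
  rw [SimpleGraph.compl_adj, hadj]
  tauto

/-- Every element of `(ZMod 4)²` is a difference of two elements of the connection set. -/
lemma exists_mem_sub_mem : ∀ d : ZMod 4 × ZMod 4,
    ∃ t ∈ connectionSet, t - d ∈ connectionSet := by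
  decide

/-- No vertex is adjacent to all of `(0,0)`, `(0,1)`, `(0,2)` in the Shrikhande graph. -/
lemma no_common_neighbor : ∀ x : ZMod 4 × ZMod 4,
    x - (0, 0) ∉ connectionSet ∨ x - (0, 1) ∉ connectionSet ∨ x - (0, 2) ∉ connectionSet := by
  decide

lemma zero_notMem_connectionSet : (0 : ZMod 4 × ZMod 4) ∉ connectionSet := by
  decide

/-- The domination number of the complement of the Shrikhande graph equals `3`: there are
three vertices dominating the graph, but no two vertices do. -/
theorem complement_shrikhande_domination_number_three :
    (∃ s1 s2 s3 : ZMod 4 × ZMod 4,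
      ∀ x : ZMod 4 × ZMod 4, x ∉ ({s1, s2, s3} : Set (ZMod 4 × ZMod 4)) →
        (shrikhandeᶜ.Adj x s1 ∨ shrikhandeᶜ.Adj x s2 ∨ shrikhandeᶜ.Adj x s3)) ∧
    (∀ u v : ZMod 4 × ZMod 4, ∃ w : ZMod 4 × ZMod 4,
      w ∉ ({u, v} : Set (ZMod 4 × ZMod 4)) ∧ ¬ shrikhandeᶜ.Adj w u ∧ ¬ shrikhandeᶜ.Adj w v) := by
  simp only [compl_shrikhande_adj, Set.mem_insert_iff, Set.mem_singleton_iff]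
  constructor
  · refine ⟨(0, 0), (0, 1), (0, 2), fun x hx => ?_⟩
    have := no_common_neighbor x
    tauto
  · intro u v
    obtain ⟨t, ht, htd⟩ := exists_mem_sub_mem (v - u)
    have hu : u + t - u ∈ connectionSet := by simpa using ht
    have hv : u + t - v ∈ connectionSet := by
      rwa [show u + t - v = t - (v - u) by abel]
    refine ⟨u + t, ?_, fun h => h.2 hu, fun h => h.2 hv⟩
    rintro (h | h)
    · rw [h, sub_self] at hu
      exact zero_notMem_connectionSet hu
    · rw [h, sub_self] at hv
      exact zero_notMem_connectionSet hv
end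

section
/- Let G be a 4K1-free finite simple graph, and suppose v1, v2, v3, v4, v5 are distinct vertices inducing a 5-cycle (vi is adjacent to vj if and only if i − j ≡ ±1 mod 5). Then the set of vertices w ∉ {v1, v2, v3, v4, v5} that are adjacent to exactly one vertex of {v1, v2, v3, v4, v5} is a clique, i.e., any two distinct such vertices are adjacent in G. -/
/-!
Let `a`, `b` be distinct vertices off the 5-cycle whose only cycle neighbours are `v p` and `v q`.
At least three cycle vertices avoid both, and since the 5-cycle has no triangle, two of these are
nonadjacent (`exists_nonadjacent_pair_avoiding`). Together with `a` and `b` they would induce a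
`4K₁` if `a` and `b` were nonadjacent.
-/

/-- Deleting at most two vertices of a 5-cycle leaves at least three; as the 5-cycle is triangle-free,
two of them are nonadjacent. -/
lemma exists_nonadjacent_pair_avoiding : ∀ p q : Fin 5, ∃ i j : Fin 5,
    i ≠ j ∧ i ≠ p ∧ i ≠ q ∧ j ≠ p ∧ j ≠ q ∧ ¬ (j = i + 1 ∨ i = j + 1) := by
  decide

/-- In a `4K₁`-free graph, if `v₁,…,v₅` induce a 5-cycle, then the vertices outside the cycle
that are adjacent to exactly one vertex of the cycle form a clique. -/
theorem fourK1_free_one_attachment_clique {V : Type*} [Fintype V] [DecidableEq V]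
    (G : SimpleGraph V) [DecidableRel G.Adj]
    (hfree : ¬ ∃ a b c d : V, a ≠ b ∧ a ≠ c ∧ a ≠ d ∧ b ≠ c ∧ b ≠ d ∧ c ≠ d ∧
      ¬ G.Adj a b ∧ ¬ G.Adj a c ∧ ¬ G.Adj a d ∧ ¬ G.Adj b c ∧ ¬ G.Adj b d ∧ ¬ G.Adj c d)
    (v : Fin 5 → V) (hinj : Function.Injective v)
    (hC5 : ∀ i j : Fin 5, G.Adj (v i) (v j) ↔ (j = i + 1 ∨ i = j + 1)) :
    ∀ a ∈ {w : V | (∀ i : Fin 5, w ≠ v i) ∧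
        ((Finset.univ : Finset (Fin 5)).filter (fun i => G.Adj w (v i))).card = 1},
      ∀ b ∈ {w : V | (∀ i : Fin 5, w ≠ v i) ∧
        ((Finset.univ : Finset (Fin 5)).filter (fun i => G.Adj w (v i))).card = 1},
        a ≠ b → G.Adj a b := by
  rintro a ⟨ha, hca⟩ b ⟨hb, hcb⟩ hab
  obtain ⟨p, hp⟩ := Finset.card_eq_one.mp hca
  obtain ⟨q, hq⟩ := Finset.card_eq_one.mp hcb
  have hap : ∀ i, G.Adj a (v i) → i = p := fun i h => by
    simpa [hp] using (Finset.mem_filter.mpr ⟨Finset.mem_univ i, h⟩ :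
      i ∈ Finset.univ.filter (fun i => G.Adj a (v i)))
  have hbq : ∀ i, G.Adj b (v i) → i = q := fun i h => by
    simpa [hq] using (Finset.mem_filter.mpr ⟨Finset.mem_univ i, h⟩ :
      i ∈ Finset.univ.filter (fun i => G.Adj b (v i)))
  obtain ⟨i, j, hij, hip, hiq, hjp, hjq, hn⟩ := exists_nonadjacent_pair_avoiding p q
  by_contra hadj
  -- If `a` and `b` were nonadjacent, `a, b, v i, v j` would be four pairwise nonadjacent vertices.
  exact hfree ⟨a, b, v i, v j, hab, ha i, ha j, hb i, hb j, hinj.ne hij, hadj,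
    fun h => hip (hap i h), fun h => hjp (hap j h), fun h => hiq (hbq i h),
    fun h => hjq (hbq j h), fun h => hn ((hC5 i j).mp h)⟩
end

section
/- Let G be a 4K1-free finite simple graph, let u be a vertex whose neighborhood is exactly {v1, v2} (with v1 ≠ v2), and let a be a vertex with a ∉ {u, v1, v2} and a not adjacent to u. Let G' be the subgraph of G induced on the vertices other than u and v2. If a and v1 are connected by a path in G', then the distance from a to v1 in G' is at most 4. -/
/-!
If the distance from `a` to `v1` in the induced graph were at least `5`, a geodesic
`a = p₀, p₁, …, p_k = v1` would have `k ≥ 5`. The vertices `p₀, p₂, p₄` are pairwise distinct and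
nonadjacent, since otherwise the geodesic could be shortcut (`geodesic_no_shortcut`). None of them
is `v1` (their indices are below `k`) or `v2` (which was deleted), so none is a neighbour of `u`.
Hence `u, p₀, p₂, p₄` are four pairwise nonadjacent vertices.
-/

/-- Vertices of a geodesic whose positions differ by at least two are distinct and nonadjacent. -/
lemma geodesic_no_shortcut {W : Type*} {H : SimpleGraph W} {x y : W} (p : H.Walk x y)
    (hp : p.length = H.dist x y) {i j : ℕ} (hij : i + 2 ≤ j) (hj : j ≤ p.length) :
    p.getVert i ≠ p.getVert j ∧ ¬ H.Adj (p.getVert i) (p.getVert j) := by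
  constructor
  · intro h
    have := SimpleGraph.dist_le ((p.take i).append ((p.drop j).copy h.symm rfl))
    simp [SimpleGraph.Walk.take_length, SimpleGraph.Walk.drop_length] at this
    omega
  · intro h
    have := SimpleGraph.dist_le ((p.take i).append (SimpleGraph.Walk.cons h (p.drop j)))
    simp [SimpleGraph.Walk.take_length, SimpleGraph.Walk.drop_length] at this
    omega

/-- In a `4K₁`-free graph, let `u` be a vertex whose neighborhood is exactly `{v₁, v₂}` and let
`a ∉ {u, v₁, v₂}` be nonadjacent to `u`.  In the subgraph induced on the vertices other than
`u` and `v₂`, if `a` and `v₁` are connected then their distance is at most `4`. -/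
theorem fourK1_free_short_path {V : Type*} [Fintype V] (G : SimpleGraph V)
    (hfree : ¬ ∃ a b c d : V, a ≠ b ∧ a ≠ c ∧ a ≠ d ∧ b ≠ c ∧ b ≠ d ∧ c ≠ d ∧
      ¬ G.Adj a b ∧ ¬ G.Adj a c ∧ ¬ G.Adj a d ∧ ¬ G.Adj b c ∧ ¬ G.Adj b d ∧ ¬ G.Adj c d)
    (u v1 v2 a : V) (hv12 : v1 ≠ v2)
    (hN : G.neighborSet u = {v1, v2})
    (hau : a ≠ u) (hav1 : a ≠ v1) (hav2 : a ≠ v2) (hadj : ¬ G.Adj a u)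
    (ha : a ∈ {w : V | w ≠ u ∧ w ≠ v2}) (hv1 : v1 ∈ {w : V | w ≠ u ∧ w ≠ v2})
    (hreach : (G.induce {w : V | w ≠ u ∧ w ≠ v2}).Reachable ⟨a, ha⟩ ⟨v1, hv1⟩) :
    (G.induce {w : V | w ≠ u ∧ w ≠ v2}).dist ⟨a, ha⟩ ⟨v1, hv1⟩ ≤ 4 := by
  by_contra hlt
  obtain ⟨p, hp⟩ := hreach.exists_walk_length_eq_dist
  have hk : 5 ≤ p.length := by omega
  have hsep : ∀ i j, i + 2 ≤ j → j ≤ p.length →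
      (p.getVert i : V) ≠ p.getVert j ∧ ¬ G.Adj (p.getVert i) (p.getVert j) := by
    intro i j hij hj
    obtain ⟨hne, hna⟩ := geodesic_no_shortcut p hp hij hj
    exact ⟨fun h => hne (Subtype.ext h), fun h => hna h⟩
  have hu : ∀ i, i < p.length → u ≠ p.getVert i ∧ ¬ G.Adj u (p.getVert i) := by
    intro i hi
    refine ⟨fun h => (p.getVert i).2.1 h.symm, fun h => ?_⟩
    have hmem : (p.getVert i : V) ∈ G.neighborSet u := h
    rw [hN] at hmem
    rcases hmem with h1 | h2
    · -- A geodesic meets its endpoint only at its last position.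
      have hd := SimpleGraph.dist_le ((p.take i).copy rfl
        (Subtype.ext h1 : p.getVert i = ⟨v1, hv1⟩))
      rw [SimpleGraph.Walk.length_copy, SimpleGraph.Walk.take_length] at hd
      omega
    · exact (p.getVert i).2.2 h2
  obtain ⟨n0, a0⟩ := hu 0 (by omega)
  obtain ⟨n2, a2⟩ := hu 2 (by omega)
  obtain ⟨n4, a4⟩ := hu 4 (by omega)
  obtain ⟨n02, a02⟩ := hsep 0 2 (by omega) (by omega)
  obtain ⟨n04, a04⟩ := hsep 0 4 (by omega) (by omega)
  obtain ⟨n24, a24⟩ := hsep 2 4 (by omega) (by omega)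
  exact hfree ⟨u, _, _, _, n0, n2, n4, n02, n04, n24, a0, a2, a4, a02, a04, a24⟩
end

section
/- Let p ≥ 2 and let G be a connected finite simple graph on a nonempty vertex set that is (pK1+K2)-free. Then G has a dominating set of size at most p + 1, i.e., a set S of at most p + 1 vertices such that every vertex outside S has a neighbor in S. (This is the domination bound underlying the proof that such graphs have cop number at most p + 1.) -/
/-!
If `G` has an edge `yz`, let `T` be a maximal independent set among the vertices distinct from and
nonadjacent to both `y` and `z`. Since `G` is `(pK₁ + K₂)`-free, `T` has at most `p - 1` elements,
and by maximality `T ∪ {y, z}` dominates `G`. If `G` has no edge, connectedness forces it to be a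
single vertex.
-/

/-- Every connected `(pK₁ + K₂)`-free graph (`p ≥ 2`) on a nonempty finite vertex set has a
dominating set of size at most `p + 1`. -/
theorem pK1K2_free_dominating_set {V : Type*} [Fintype V] [Nonempty V]
    (G : SimpleGraph V) (hconn : G.Connected) (p : ℕ) (hp : 2 ≤ p)
    (hfree : ¬ ∃ (f : Fin p → V) (y z : V), Function.Injective f ∧
      (∀ i : Fin p, f i ≠ y) ∧ (∀ i : Fin p, f i ≠ z) ∧ y ≠ z ∧
      G.Adj y z ∧ (∀ i j : Fin p, i ≠ j → ¬ G.Adj (f i) (f j)) ∧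
      (∀ i : Fin p, ¬ G.Adj (f i) y) ∧ (∀ i : Fin p, ¬ G.Adj (f i) z)) :
    ∃ S : Finset V, S.card ≤ p + 1 ∧ ∀ v : V, v ∉ S → ∃ s ∈ S, G.Adj v s := by
  classical
  by_cases hE : ∃ y z, G.Adj y z
  · obtain ⟨y, z, hyz⟩ := hE
    let P : Finset V → Prop := fun T =>
      (∀ a ∈ T, ∀ b ∈ T, ¬ G.Adj a b) ∧
        ∀ a ∈ T, a ≠ y ∧ a ≠ z ∧ ¬ G.Adj a y ∧ ¬ G.Adj a z
    obtain ⟨T, hT, hmax⟩ := Finset.exists_max_image (Finset.univ.filter P) Finset.card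
      ⟨∅, by simp [P]⟩
    simp only [Finset.mem_filter, Finset.mem_univ, true_and] at hT hmax
    obtain ⟨hind, hfar⟩ := hT
    have hcard : T.card < p := by
      by_contra! hle
      obtain ⟨U, hUT, hU⟩ := Finset.exists_subset_card_eq hle
      let e := (U.equivFinOfCardEq hU).symm
      have he : ∀ i, (e i : V) ∈ T := fun i => hUT (e i).2
      exact hfree ⟨fun i => e i, y, z, Subtype.val_injective.comp e.injective,
        fun i => (hfar _ (he i)).1, fun i => (hfar _ (he i)).2.1, hyz.ne, hyz,
        fun i j _ => hind _ (he i) _ (he j),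
        fun i => (hfar _ (he i)).2.2.1, fun i => (hfar _ (he i)).2.2.2⟩
    refine ⟨insert y (insert z T), ?_, fun v hv => ?_⟩
    · have h₁ := Finset.card_insert_le y (insert z T)
      have h₂ := Finset.card_insert_le z T
      omega
    · by_contra! hnon
      simp only [Finset.mem_insert, not_or, forall_eq_or_imp] at hv hnon
      obtain ⟨hvy, hvz, hvT⟩ := hv
      obtain ⟨hny, hnz, hnT⟩ := hnon
      -- An undominated `v` could be added to `T`, contradicting maximality.
      have hP : P (insert v T) := by
        refine ⟨fun a ha b hb hab => ?_, fun a ha => ?_⟩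
        · rcases Finset.mem_insert.1 ha with rfl | haT <;>
            rcases Finset.mem_insert.1 hb with rfl | hbT
          · exact G.irrefl hab
          · exact hnT b hbT hab
          · exact hnT a haT hab.symm
          · exact hind a haT b hbT hab
        · rcases Finset.mem_insert.1 ha with rfl | ha
          · exact ⟨hvy, hvz, hny, hnz⟩
          · exact hfar a ha
      have := hmax _ hP
      rw [Finset.card_insert_of_notMem hvT] at this
      omega
  · push Not at hE
    obtain ⟨v₀⟩ := ‹Nonempty V›
    refine ⟨{v₀}, by simp, fun v hv => ?_⟩
    have hne : v ≠ v₀ := by simpa using hv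
    obtain ⟨w⟩ := hconn.preconnected v v₀
    cases w with
    | nil => exact absurd rfl hne
    | cons h _ => exact absurd h (hE _ _)
end
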